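/- arXiv:2108.00931 — 3 statements merged into one kernel-verified Lean document; each statement's English description precedes it below -/
import Mathlib

section
/- Let n ≥ 2 and N = n², and let |G_n⟩ ∈ ℂ^(2^N) be the cluster state, i.e., the graph state of the n×n grid graph. For every ordering q_1,…,q_N of the N qubits of |G_n⟩, there exists j ∈ {1,…,N−1} such that the Schmidt rank of |G_n⟩ relative to the bipartition ({q_1,…,q_j}, {q_{j+1},…,q_N}) is at least 2^(n−1). -/
open Matrix

noncomputable section

/-- The single-qubit Pauli matrices. -/
def pauliI : Matrix (Fin 2) (Fin 2) ℂ := 1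
def pauliX : Matrix (Fin 2) (Fin 2) ℂ := !![0, 1; 1, 0]
def pauliY : Matrix (Fin 2) (Fin 2) ℂ := !![0, -Complex.I; Complex.I, 0]
def pauliZ : Matrix (Fin 2) (Fin 2) ℂ := !![1, 0; 0, -1]

/-- Kronecker product of a `2 × 2` matrix (most significant qubit) with a
`2^m × 2^m` matrix, indexed by `Fin (2^(m+1))`. -/
def kron {m : ℕ} (A : Matrix (Fin 2) (Fin 2) ℂ) (B : Matrix (Fin (2 ^ m)) (Fin (2 ^ m)) ℂ) :
    Matrix (Fin (2 ^ (m + 1))) (Fin (2 ^ (m + 1))) ℂ := fun i j =>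
  A (if (i : ℕ) < 2 ^ m then 0 else 1) (if (j : ℕ) < 2 ^ m then 0 else 1) *
    B ⟨(i : ℕ) % 2 ^ m, Nat.mod_lt _ (pow_pos (by norm_num) m)⟩
      ⟨(j : ℕ) % 2 ^ m, Nat.mod_lt _ (pow_pos (by norm_num) m)⟩

/-- `IsPauliString n M` holds iff `M` is a Kronecker product of `n` single-qubit
Pauli matrices. -/
def IsPauliString : (n : ℕ) → Matrix (Fin (2 ^ n)) (Fin (2 ^ n)) ℂ → Prop
  | 0, M => M = 1
  | n + 1, M => ∃ Q ∈ ({pauliI, pauliX, pauliY, pauliZ} : Set (Matrix (Fin 2) (Fin 2) ℂ)),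
      ∃ B, IsPauliString n B ∧ M = kron Q B

/-- An `n`-qubit Pauli LIM: a nonzero scalar multiple of an `n`-qubit Pauli string. -/
def IsPauliLIM (n : ℕ) (A : Matrix (Fin (2 ^ n)) (Fin (2 ^ n)) ℂ) : Prop :=
  ∃ (c : ℂ) (P : Matrix (Fin (2 ^ n)) (Fin (2 ^ n)) ℂ),
    c ≠ 0 ∧ IsPauliString n P ∧ A = c • P

/-- The stabilizer set of a vector: all `n`-qubit Pauli LIMs fixing `φ`. -/
def PauliStab {n : ℕ} (φ : Fin (2 ^ n) → ℂ) : Set (Matrix (Fin (2 ^ n)) (Fin (2 ^ n)) ℂ) :=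
  {A | IsPauliLIM n A ∧ A.mulVec φ = φ}

/-- Two vectors are Pauli-isomorphic if some Pauli LIM maps one to the other. -/
def PauliIso {n : ℕ} (φ ψ : Fin (2 ^ n) → ℂ) : Prop :=
  ∃ A, IsPauliLIM n A ∧ A.mulVec φ = ψ

/-- Membership in the `n`-qubit Pauli group: `i^k · P` with `P` a Pauli string. -/
def InPauliGroup (n : ℕ) (A : Matrix (Fin (2 ^ n)) (Fin (2 ^ n)) ℂ) : Prop :=
  ∃ (k : Fin 4) (P : Matrix (Fin (2 ^ n)) (Fin (2 ^ n)) ℂ),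
    IsPauliString n P ∧ A = (Complex.I ^ (k : ℕ)) • P

/-- The vector `|0⟩⊗φ₀ + |1⟩⊗φ₁`: first `2^m` coordinates are `φ₀`, last are `φ₁`. -/
def dirac {m : ℕ} (φ₀ φ₁ : Fin (2 ^ m) → ℂ) : Fin (2 ^ (m + 1)) → ℂ := fun i =>
  if h : (i : ℕ) < 2 ^ m then φ₀ ⟨i, h⟩
  else φ₁ ⟨(i : ℕ) - 2 ^ m, by
    have h1 := i.isLt
    have h2 : (2 : ℕ) ^ (m + 1) = 2 ^ m + 2 ^ m := by rw [pow_succ]; omega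
    omega⟩

/-- An `n`-qubit stabilizer state: a unit vector stabilized by exactly `2^n`
elements of the Pauli group. -/
def IsStabilizerState (n : ℕ) (φ : Fin (2 ^ n) → ℂ) : Prop :=
  (∑ i, Complex.normSq (φ i)) = 1 ∧
    Set.ncard {A : Matrix (Fin (2 ^ n)) (Fin (2 ^ n)) ℂ |
      InPauliGroup n A ∧ A.mulVec φ = φ} = 2 ^ n

/-- The standard Hermitian inner product on `ℂ^N`. -/
def hinner {N : ℕ} (φ ψ : Fin N → ℂ) : ℂ :=
  ∑ i, (starRingEnd ℂ) (φ i) * ψ i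



/-- `Z^{a_m} ⊗ ⋯ ⊗ Z^{a_1}` (the `j`-th tensor factor is `Z` iff `a j = true`). -/
def zString : (m : ℕ) → (Fin m → Bool) → Matrix (Fin (2 ^ m)) (Fin (2 ^ m)) ℂ
  | 0, _ => 1
  | m + 1, a => kron (if a (Fin.last m) then pauliZ else 1) (zString m (fun j => a j.castSucc))

open Classical in
/-- Number of edges of `G` with both endpoints in the set of vertices
`j` with `x.testBit j = true`. -/
def edgeCount {n : ℕ} (G : SimpleGraph (Fin n)) (x : ℕ) : ℕ :=
  (Finset.univ.filter (fun p : Fin n × Fin n =>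
    p.1 < p.2 ∧ G.Adj p.1 p.2 ∧ x.testBit p.1.val = true ∧ x.testBit p.2.val = true)).card

/-- The graph state of a simple graph on vertices `{0, …, n-1}`; vertex `j`
corresponds to the `j`-th bit of the basis-state index. -/
def graphState {n : ℕ} (G : SimpleGraph (Fin n)) : Fin (2 ^ n) → ℂ :=
  fun x => (-1 : ℂ) ^ edgeCount G (x : ℕ) / Real.sqrt (2 ^ n)

/-- The subfunction of `f` of order `ℓ` obtained by fixing the first `ℓ`
arguments to `a`. -/
def subfun {N : ℕ} (f : (Fin N → Bool) → ℂ) (ℓ : ℕ) (a : Fin ℓ → Bool) :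
    (Fin (N - ℓ) → Bool) → ℂ := fun x =>
  f (fun i => if h : (i : ℕ) < ℓ then a ⟨i, h⟩
      else x ⟨(i : ℕ) - ℓ, by have := i.isLt; omega⟩)

/-- A strong matching: a set of pairwise vertex-disjoint edges of `G` such that
every edge of `G` with both endpoints among the matched vertices is in `M`. -/
def IsStrongMatching {V : Type*} (G : SimpleGraph V) (M : Set (Sym2 V)) : Prop :=
  M ⊆ G.edgeSet ∧
  (∀ e₁ ∈ M, ∀ e₂ ∈ M, e₁ ≠ e₂ → ∀ v, v ∈ e₁ → v ∉ e₂) ∧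
  (∀ e ∈ G.edgeSet, (∀ v ∈ e, ∃ e' ∈ M, v ∈ e') → e ∈ M)

/-- An `(S,T)`-strong matching: a strong matching each of whose edges has one
endpoint in `S` and the other in `T`. -/
def IsSTStrongMatching {V : Type*} (G : SimpleGraph V) (S T : Set V) (M : Set (Sym2 V)) : Prop :=
  IsStrongMatching G M ∧ ∀ e ∈ M, ∃ u ∈ S, ∃ w ∈ T, e = s(u, w)

/-- The `n × n` grid graph. -/
def gridGraph (n : ℕ) : SimpleGraph (Fin n × Fin n) :=
  SimpleGraph.fromRel (fun u v =>
    (u.1 = v.1 ∧ (u.2 : ℕ) + 1 = (v.2 : ℕ)) ∨ (u.2 = v.2 ∧ (u.1 : ℕ) + 1 = (v.1 : ℕ)))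

/-- The amplitude function of the graph state of `G`, on assignments `V → Bool`. -/
def ampGraphState {V : Type*} [Fintype V] (G : SimpleGraph V) (x : V → Bool) : ℂ :=
  (-1 : ℂ) ^ Set.ncard {e ∈ G.edgeSet | ∀ v ∈ e, x v = true} / Real.sqrt (2 ^ Fintype.card V)

open Classical in
/-- The coset state of `C ⊆ {0,…,2^n − 1}`: the uniform superposition over `C`. -/
def cosetState (n : ℕ) (C : Set ℕ) : Fin (2 ^ n) → ℂ :=
  fun x => if (x : ℕ) ∈ C then 1 / Real.sqrt (C.ncard) else 0


/-- `X^{a_m} ⊗ ⋯ ⊗ X^{a_1}` (the `j`-th tensor factor is `X` iff `a j = true`). -/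
def xString : (m : ℕ) → (Fin m → Bool) → Matrix (Fin (2 ^ m)) (Fin (2 ^ m)) ℂ
  | 0, _ => 1
  | m + 1, a => kron (if a (Fin.last m) then pauliX else 1) (xString m (fun j => a j.castSucc))


/-!
Across a cut, the amplitude of a graph state is a product of a factor depending on each side alone
and the sign `(-1) ^ (number of crossing edges)`, and over `𝔽₂` that number is the bilinear form
given by the crossing block of the adjacency matrix. Distinct characters of `𝔽₂ⁿ` being linearly
independent, the Schmidt rank is `2` to the rank of this block over `𝔽₂`, the cut-rank.

Cut the ordering at the first moment a whole line of the grid, say a row, has been swept. Just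
before that moment no column was complete, so every column, with one possible exception, meets the
full row and still has an unswept vertex. In each such column, take an unswept vertex at minimal
distance from the full row and the edge to it from the preceding, swept vertex of a shortest path.
An edge between different columns stays in one row, so the swept end of a chosen edge can only be
adjacent to the unswept end of another chosen edge if that end is strictly closer to the full row
than its own unswept end: ordered by this distance, the chosen edges span a triangular
submatrix with nonzero diagonal.
-/

open Finset

section Rank

variable {m n K : Type*}

theorem card_le_rank_of_triangular [Fintype n] [Field K] {ι γ : Type*} [Fintype ι] [LinearOrder γ]
    (A : Matrix m n K) (p : ι → m) (q : ι → n) (height : ι → γ)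
    (hdiag : ∀ i, A (p i) (q i) ≠ 0)
    (htri : ∀ i k, A (p i) (q k) ≠ 0 → i = k ∨ height k < height i) :
    Fintype.card ι ≤ A.rank := by
  classical
  have hblock : (A.submatrix p q).BlockTriangular (OrderDual.toDual ∘ height) := by
    intro i k hik
    by_contra hne
    rcases htri i k hne with rfl | hlt
    · exact lt_irrefl _ hik
    · exact lt_asymm hik hlt
  have hdet : (A.submatrix p q).det ≠ 0 := by
    rw [hblock.det, prod_ne_zero_iff]
    intro a _
    have hdiagonal : (A.submatrix p q).toSquareBlock (OrderDual.toDual ∘ height) a =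
        diagonal fun i => A (p i.1) (q i.1) := by
      ext i k
      by_cases hik : i = k
      · simp [hik, toSquareBlock_def]
      · rw [diagonal_apply_ne _ hik]
        by_contra hne
        rcases htri i k hne with h | h
        · exact hik (Subtype.ext h)
        · exact h.ne (OrderDual.toDual.injective (k.2.trans i.2.symm))
    rw [hdiagonal, det_diagonal, prod_ne_zero_iff]
    exact fun i _ => hdiag i.1
  exact (rank_of_det_ne_zero hdet).symm.trans_le (rank_submatrix_le A p q)

theorem rank_rescale [Finite m] [Fintype n] [Field K] (A : Matrix m n K) {u : m → K} {w : n → K}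
    (hu : ∀ i, u i ≠ 0) (hw : ∀ k, w k ≠ 0) :
    (of fun i k => u i * A i k * w k).rank = A.rank := by
  classical
  have := Fintype.ofFinite m
  have hfactor : (of fun i k => u i * A i k * w k) = diagonal u * A * diagonal w := by
    ext i k
    simp
  rw [hfactor, rank_mul_eq_left_of_det_ne_zero, rank_mul_eq_right_of_det_ne_zero] <;>
    simpa [prod_ne_zero_iff]

end Rank

section Characters

variable {m n F K : Type*} [Fintype n] [Field F] [Field K]

/-- The additive character `y ↦ ψ (w ⬝ᵥ y)` of `Fⁿ`. -/
def dotProductChar (ψ : AddChar F K) (w : n → F) : AddChar (n → F) K :=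
  ψ.compAddMonoidHom (AddMonoidHom.mk' (w ⬝ᵥ ·) (dotProduct_add w))

theorem dotProductChar_injective {ψ : AddChar F K} (hψ : ψ.IsPrimitive) :
    Function.Injective (dotProductChar ψ : (n → F) → AddChar (n → F) K) := by
  classical
  intro w w' h
  funext k
  refine AddChar.to_mulShift_inj_of_isPrimitive hψ ?_
  ext t
  simpa [dotProductChar] using DFunLike.congr_fun h (Pi.single k t)

theorem linearIndependent_addChar (G K : Type*) [AddMonoid G] [CommRing K] [IsDomain K] :
    LinearIndependent K (fun χ : AddChar G K => (χ : G → K)) :=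
  (linearIndependent_monoidHom (Multiplicative G) K).comp AddChar.toMonoidHomEquiv
    AddChar.toMonoidHomEquiv.injective

theorem rank_addChar_dotProduct_mulVec [DecidableEq n] [Fintype m] [Fintype F]
    {ψ : AddChar F K} (hψ : ψ.IsPrimitive) (A : Matrix m n F) :
    (of fun (x : m → F) (y : n → F) => ψ (x ⬝ᵥ A *ᵥ y)).rank = Fintype.card F ^ A.rank := by
  classical
  -- Row `x` depends only on `x ᵥ* A`: up to repetition, the rows are the characters indexed by the
  -- row space of `A`.
  let characters : Matrix A.vecMulLinear.range (n → F) K :=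
    of fun w => dotProductChar ψ (w : n → F)
  have hrank : characters.rank = Fintype.card F ^ A.rank := by
    have hindep : LinearIndependent K characters.row :=
      (linearIndependent_addChar (n → F) K).comp
        (fun w : A.vecMulLinear.range => dotProductChar ψ (w : n → F))
        ((dotProductChar_injective hψ).comp Subtype.val_injective)
    rw [hindep.rank_matrix, Module.card_eq_pow_finrank (K := F), ← rank_transpose, rank,
      mulVecLin_transpose]
  have hmatrix : (of fun (x : m → F) (y : n → F) => ψ (x ⬝ᵥ A *ᵥ y)) =
      characters.submatrix A.vecMulLinear.rangeRestrict id := by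
    ext x y
    simp [characters, dotProductChar, dotProduct_mulVec]
  obtain ⟨lift, hlift⟩ := A.vecMulLinear.surjective_rangeRestrict.hasRightInverse
  rw [hmatrix, ← hrank]
  refine le_antisymm (rank_submatrix_le _ _ _) ?_
  calc characters.rank
      = ((characters.submatrix A.vecMulLinear.rangeRestrict id).submatrix lift id).rank := by
        rw [submatrix_submatrix, hlift.comp_eq_id, Function.id_comp, submatrix_id_id]
    _ ≤ (characters.submatrix A.vecMulLinear.rangeRestrict id).rank := rank_submatrix_le _ _ _

end Characters

section GraphState

variable {V : Type*}

theorem edgeSet_inter_sym2_union (G : SimpleGraph V) (s t : Set V) :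
    G.edgeSet ∩ (s ∪ t).sym2 = G.edgeSet ∩ s.sym2 ∪ G.edgeSet ∩ t.sym2 ∪
      (fun p => s(p.1, p.2)) '' {p : V × V | p.1 ∈ s ∧ p.2 ∈ t ∧ G.Adj p.1 p.2} := by
  ext e
  induction e with | _ u v
  simp only [Set.mem_inter_iff, Set.mem_union, Set.mem_image, Set.mk_mem_sym2_iff,
    SimpleGraph.mem_edgeSet, Set.mem_ofPred_eq, Prod.exists, Sym2.eq_iff]
  constructor
  · rintro ⟨huv, hu | hu, hv | hv⟩
    · grind
    · exact Or.inr ⟨u, v, ⟨hu, hv, huv⟩, by simp⟩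
    · exact Or.inr ⟨v, u, ⟨hv, hu, huv.symm⟩, by simp⟩
    · grind
  · grind [SimpleGraph.adj_comm]

theorem ncard_edgeSet_inter_sym2_union [Finite V] (G : SimpleGraph V) {s t : Set V}
    (hst : Disjoint s t) :
    (G.edgeSet ∩ (s ∪ t).sym2).ncard = (G.edgeSet ∩ s.sym2).ncard + (G.edgeSet ∩ t.sym2).ncard +
      {p : V × V | p.1 ∈ s ∧ p.2 ∈ t ∧ G.Adj p.1 p.2}.ncard := by
  have hinj : Set.InjOn (fun p : V × V => s(p.1, p.2))
      {p : V × V | p.1 ∈ s ∧ p.2 ∈ t ∧ G.Adj p.1 p.2} := by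
    rintro ⟨u, v⟩ ⟨hu, -, -⟩ ⟨u', v'⟩ ⟨hu', hv', -⟩ heq
    rcases Sym2.eq_iff.mp heq with ⟨rfl, rfl⟩ | ⟨rfl, rfl⟩
    · rfl
    · exact absurd hv' (hst.notMem_of_mem_left hu)
  have hwithin : Disjoint (G.edgeSet ∩ s.sym2) (G.edgeSet ∩ t.sym2) := by
    rw [Set.disjoint_left]
    rintro ⟨u, v⟩ ⟨-, hu, -⟩ ⟨-, hu', -⟩
    exact hst.notMem_of_mem_left hu hu'
  have hcross : Disjoint (G.edgeSet ∩ s.sym2 ∪ G.edgeSet ∩ t.sym2)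
      ((fun p => s(p.1, p.2)) '' {p : V × V | p.1 ∈ s ∧ p.2 ∈ t ∧ G.Adj p.1 p.2}) := by
    rw [Set.disjoint_right]
    rintro _ ⟨⟨u, v⟩, ⟨hu, hv, -⟩, rfl⟩ (⟨-, -, hv'⟩ | ⟨-, hu', -⟩)
    · exact hst.notMem_of_mem_left hv' hv
    · exact hst.notMem_of_mem_left hu hu'
  rw [edgeSet_inter_sym2_union, Set.ncard_union_eq hcross, Set.ncard_union_eq hwithin,
    hinj.ncard_image]

variable [Fintype V]

theorem ampGraphState_eq (G : SimpleGraph V) (x : V → Bool) :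
    ampGraphState G x =
      (-1) ^ (G.edgeSet ∩ {v | x v = true}.sym2).ncard / Real.sqrt (2 ^ Fintype.card V) := by
  have hset : {e ∈ G.edgeSet | ∀ v ∈ e, x v = true} = G.edgeSet ∩ {v | x v = true}.sym2 := by
    ext e
    simp [Set.mem_sym2_iff_subset, Set.subset_def]
  rw [ampGraphState, hset]

theorem ampGraphState_ne_zero (G : SimpleGraph V) (x : V → Bool) : ampGraphState G x ≠ 0 := by
  simp [ampGraphState]

theorem ampGraphState_sup (G : SimpleGraph V) {x y : V → Bool} (hxy : Disjoint x y) :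
    ampGraphState G (x ⊔ y) = ampGraphState G x *
      (-1) ^ {p : V × V | x p.1 = true ∧ y p.2 = true ∧ G.Adj p.1 p.2}.ncard *
      (Real.sqrt (2 ^ Fintype.card V) * ampGraphState G y) := by
  have hunion : {v | (x ⊔ y) v = true} = {v | x v = true} ∪ {v | y v = true} := by
    ext v
    simp
  have hdisj : Disjoint {v | x v = true} {v | y v = true} := by
    rw [Set.disjoint_left]
    intro v hx hy
    have := Pi.disjoint_iff.mp hxy v
    simp_all
  simp only [ampGraphState_eq, hunion, ncard_edgeSet_inter_sym2_union G hdisj, pow_add]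
  field_simp
  rfl

end GraphState

section CutRank

variable {V W α β : Type*}

open Classical in
/-- The `α × β` block over `𝔽₂` of the adjacency matrix of `G`, where `f` encodes an ordered
bipartition of the vertices. -/
def cutMatrix (G : SimpleGraph V) (f : α ⊕ β ≃ V) : Matrix α β (ZMod 2) :=
  (G.adjMatrix (ZMod 2)).submatrix (f ∘ Sum.inl) (f ∘ Sum.inr)

/-- The cut-rank of `G` across the bipartition of its vertices encoded by `f`. -/
def cutRank [Fintype β] (G : SimpleGraph V) (f : α ⊕ β ≃ V) : ℕ :=
  (cutMatrix G f).rank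

open Classical in
theorem cutMatrix_apply (G : SimpleGraph V) (f : α ⊕ β ≃ V) (i : α) (k : β) :
    cutMatrix G f i k = if G.Adj (f (.inl i)) (f (.inr k)) then 1 else 0 :=
  rfl

theorem cutMatrix_ne_zero_iff {G : SimpleGraph V} {f : α ⊕ β ≃ V} {i : α} {k : β} :
    cutMatrix G f i k ≠ 0 ↔ G.Adj (f (.inl i)) (f (.inr k)) := by
  simp [cutMatrix_apply]

theorem cutRank_trans_iso [Fintype β] {G : SimpleGraph V} {H : SimpleGraph W} (f : α ⊕ β ≃ V)
    (φ : G ≃g H) : cutRank H (f.trans φ.toEquiv) = cutRank G f := by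
  have hmatrix : cutMatrix H (f.trans φ.toEquiv) = cutMatrix G f := by
    classical
    ext i k
    simp only [cutMatrix_apply, Equiv.trans_apply, RelIso.coe_fn_toEquiv]
    exact if_congr φ.map_adj_iff rfl rfl
  rw [cutRank, cutRank, hmatrix]

/-- A bit, read as an element of the field with two elements. -/
def bitEquiv : Bool ≃ ZMod 2 := finTwoEquiv.symm

theorem bitEquiv_eq_ite (b : Bool) : bitEquiv b = if b then 1 else 0 := by
  cases b <;> rfl

theorem ncard_adj_eq_dotProduct_mulVec [Fintype α] [Fintype β] (G : SimpleGraph V) (f : α ⊕ β ≃ V)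
    (a : α → Bool) (b : β → Bool) :
    (({p : V × V | (Sum.elim a ⊥ ∘ f.symm) p.1 = true ∧ (Sum.elim ⊥ b ∘ f.symm) p.2 = true ∧
        G.Adj p.1 p.2}.ncard : ℕ) : ZMod 2) =
      (bitEquiv ∘ a) ⬝ᵥ cutMatrix G f *ᵥ (bitEquiv ∘ b) := by
  classical
  have himage : {p : V × V | (Sum.elim a ⊥ ∘ f.symm) p.1 = true ∧
      (Sum.elim ⊥ b ∘ f.symm) p.2 = true ∧ G.Adj p.1 p.2} =
      Prod.map (f ∘ Sum.inl) (f ∘ Sum.inr) ''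
        {q : α × β | a q.1 = true ∧ b q.2 = true ∧ G.Adj (f (.inl q.1)) (f (.inr q.2))} := by
    ext ⟨u, v⟩
    obtain ⟨u, rfl⟩ := f.surjective u
    obtain ⟨v, rfl⟩ := f.surjective v
    rcases u with u | u <;> rcases v with v | v <;> simp
  rw [himage, Set.ncard_image_of_injective _
    ((f.injective.comp Sum.inl_injective).prodMap (f.injective.comp Sum.inr_injective)),
    Set.ncard_eq_toFinset_card', Set.toFinset_ofPred, natCast_card_filter, Fintype.sum_prod_type]
  simp only [dotProduct, mulVec, mul_sum, Function.comp_apply, cutMatrix_apply, bitEquiv_eq_ite]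
  refine sum_congr rfl fun i _ => sum_congr rfl fun k _ => ?_
  grind

/-- The sign character `t ↦ (-1) ^ t` of the field with two elements. -/
def signChar : AddChar (ZMod 2) ℂ :=
  AddChar.zmodChar 2 (ζ := -1) neg_one_sq

theorem signChar_natCast (k : ℕ) : signChar k = (-1) ^ k :=
  AddChar.zmodChar_apply' neg_one_sq k

theorem signChar_isPrimitive : signChar.IsPrimitive :=
  AddChar.zmodChar_primitive_of_primitive_root 2 (IsPrimitiveRoot.neg_one 0 two_ne_zero.symm)

theorem ampGraphState_sumElim [Fintype V] [Fintype α] [Fintype β] (G : SimpleGraph V)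
    (f : α ⊕ β ≃ V) (a : α → Bool) (b : β → Bool) :
    ampGraphState G (Sum.elim a b ∘ f.symm) =
      ampGraphState G (Sum.elim a ⊥ ∘ f.symm) *
        signChar ((bitEquiv ∘ a) ⬝ᵥ cutMatrix G f *ᵥ (bitEquiv ∘ b)) *
        (Real.sqrt (2 ^ Fintype.card V) * ampGraphState G (Sum.elim ⊥ b ∘ f.symm)) := by
  have hsup : Sum.elim a b ∘ f.symm = (Sum.elim a ⊥ ∘ f.symm) ⊔ (Sum.elim ⊥ b ∘ f.symm) := by
    ext v
    rcases h : f.symm v <;> simp [h]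
  have hdisj : Disjoint (Sum.elim a ⊥ ∘ f.symm) (Sum.elim ⊥ b ∘ f.symm) := by
    rw [Pi.disjoint_iff]
    intro v
    rcases h : f.symm v with i | k
    · simpa [h] using disjoint_bot_right (a := a i)
    · simpa [h] using disjoint_bot_left (a := b k)
  rw [hsup, ampGraphState_sup G hdisj, ← ncard_adj_eq_dotProduct_mulVec, signChar_natCast]

theorem rank_ampGraphState_sumElim [Fintype V] [Finite α] [Fintype β] [DecidableEq β]
    (G : SimpleGraph V) (f : α ⊕ β ≃ V) :
    rank (fun (a : α → Bool) (b : β → Bool) => ampGraphState G (Sum.elim a b ∘ f.symm)) =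
      2 ^ cutRank G f := by
  have := Fintype.ofFinite α
  let signs : Matrix (α → ZMod 2) (β → ZMod 2) ℂ :=
    of fun x y => signChar (x ⬝ᵥ cutMatrix G f *ᵥ y)
  calc rank (fun (a : α → Bool) (b : β → Bool) => ampGraphState G (Sum.elim a b ∘ f.symm))
      = rank (of fun (a : α → Bool) (b : β → Bool) =>
          ampGraphState G (Sum.elim a ⊥ ∘ f.symm) *
            signs.submatrix (Equiv.piCongrRight fun _ => bitEquiv)
              (Equiv.piCongrRight fun _ => bitEquiv) a b *
            (Real.sqrt (2 ^ Fintype.card V) * ampGraphState G (Sum.elim ⊥ b ∘ f.symm))) := by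
        congr 1
        ext a b
        exact ampGraphState_sumElim G f a b
    _ = signs.rank := by
        rw [rank_rescale _ (fun a => ampGraphState_ne_zero G _)
          (fun b => mul_ne_zero (by simp) (ampGraphState_ne_zero G _)), rank_submatrix]
    _ = 2 ^ cutRank G f := by
        rw [rank_addChar_dotProduct_mulVec signChar_isPrimitive, ZMod.card, cutRank]

end CutRank

section BoxProd

variable {V W α β : Type*}

theorem exists_adj_dist_lt_of_preconnected {G : SimpleGraph V} (hG : G.Preconnected) {r : V}
    {s : Set V} (hr : r ∉ s) (hs : s.Nonempty) :
    ∃ g ∉ s, ∃ f ∈ s, G.Adj g f ∧ G.dist r g < G.dist r f := by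
  obtain ⟨f, hf, hmin⟩ := exists_minimalFor_of_wellFoundedLT (· ∈ s) (G.dist r) hs
  obtain ⟨p, hp⟩ := (hG r f).exists_walk_length_eq_dist
  have hnil : ¬p.Nil := fun h => hr (h.eq ▸ hf)
  have hlt : G.dist r p.penultimate < G.dist r f :=
    calc G.dist r p.penultimate
        ≤ p.dropLast.length := SimpleGraph.dist_le p.dropLast
      _ < p.length := Nat.lt_of_succ_le (SimpleGraph.Walk.length_dropLast_add_one hnil).le
      _ = G.dist r f := hp
  exact ⟨p.penultimate, fun h => hlt.not_ge (hmin h hlt.le), f, hf, p.adj_penultimate hnil, hlt⟩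

theorem card_le_cutRank_boxProd [Fintype β] {G : SimpleGraph V} (hG : G.Preconnected)
    (H : SimpleGraph W) (f : α ⊕ β ≃ V × W) {r : V} {T : Finset W}
    (hr : ∀ c, (f.symm (r, c)).isLeft) (hT : ∀ c ∈ T, ∃ v, (f.symm (v, c)).isRight) :
    T.card ≤ cutRank (G □ H) f := by
  have hedge (c : T) : ∃ (i : α) (k : β) (near far : V), f (.inl i) = (near, c.1) ∧
      f (.inr k) = (far, c.1) ∧ G.Adj near far ∧ G.dist r near < G.dist r far := by
    obtain ⟨near, hnear, far, hfar, hadj, hdist⟩ := exists_adj_dist_lt_of_preconnected hG (r := r)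
      (s := {v | (f.symm (v, c.1)).isRight}) (by simp [hr c.1]) (hT c.1 c.2)
    obtain ⟨i, hi⟩ := Sum.isLeft_iff.mp (Sum.not_isRight.mp hnear)
    obtain ⟨k, hk⟩ := Sum.isRight_iff.mp hfar
    exact ⟨i, k, near, far, by simp [← hi], by simp [← hk], hadj, hdist⟩
  choose row col near far hrow hcol hadj hdist using hedge
  rw [← Fintype.card_coe]
  refine card_le_rank_of_triangular (cutMatrix (G □ H) f) row col (fun c => G.dist r (far c)) ?_ ?_
  · intro c
    simpa [cutMatrix_ne_zero_iff, hrow, hcol] using hadj c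
  · intro c c' hne
    rw [cutMatrix_ne_zero_iff, hrow, hcol, SimpleGraph.boxProd_adj] at hne
    rcases hne with ⟨-, hc⟩ | ⟨-, hnear : near c = far c'⟩
    · exact Or.inl (Subtype.ext hc)
    · exact Or.inr (hnear ▸ hdist c)

end BoxProd

section Sweep

variable {V W α β : Type*}

/-- A set of vertices of the grid `V × W` that contains a whole row or a whole column. -/
def ContainsLine (s : Set (V × W)) : Prop :=
  (∃ r, ∀ c, (r, c) ∈ s) ∨ ∃ c, ∀ r, (r, c) ∈ s

theorem ContainsLine.mono {s t : Set (V × W)} (hs : ContainsLine s) (hst : s ⊆ t) :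
    ContainsLine t :=
  hs.imp (fun ⟨r, hr⟩ => ⟨r, fun c => hst (hr c)⟩) fun ⟨c, hc⟩ => ⟨c, fun r => hst (hc r)⟩

theorem containsLine_compl_singleton [Nontrivial (V × W)] (v : V × W) :
    ContainsLine ({v}ᶜ : Set (V × W)) := by
  obtain ⟨w, hw⟩ := exists_ne v
  rcases not_and_or.mp (mt Prod.ext_iff.mpr hw) with h | h
  · exact Or.inl ⟨w.1, fun c hc => h (by rw [← Set.mem_singleton_iff.mp hc])⟩
  · exact Or.inr ⟨w.2, fun r hr => h (by rw [← Set.mem_singleton_iff.mp hr])⟩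

theorem exists_notMem_of_not_containsLine_diff_singleton {s : Set (V × W)} {v : V × W}
    (h : ¬ContainsLine (s \ {v})) :
    (∀ r ≠ v.1, ∃ c, (r, c) ∉ s) ∧ ∀ c ≠ v.2, ∃ r, (r, c) ∉ s := by
  simp only [ContainsLine, not_or, not_exists, not_forall] at h
  refine ⟨fun r hr => (h.1 r).imp fun c hc hs => hc ⟨hs, ?_⟩,
    fun c hc => (h.2 c).imp fun r hr hs => hr ⟨hs, ?_⟩⟩
  · rintro rfl
    exact hr rfl
  · rintro rfl
    exact hc rfl

theorem exists_first_containsLine {N : ℕ} (hN : 2 ≤ N) (σ : Fin N ≃ V × W) :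
    ∃ j v, 1 ≤ j ∧ j < N ∧ ContainsLine {w | (σ.symm w : ℕ) < j} ∧
      ¬ContainsLine ({w | (σ.symm w : ℕ) < j} \ {v}) := by
  have : NeZero N := ⟨by omega⟩
  have hempty : ¬ContainsLine {w | (σ.symm w : ℕ) < 0} := by
    have : Nonempty V := ⟨(σ 0).1⟩
    have : Nonempty W := ⟨(σ 0).2⟩
    simp [ContainsLine]
  have hlast : ContainsLine {w | (σ.symm w : ℕ) < N - 1} := by
    have := Fin.nontrivial_iff_two_le.mpr hN
    have := σ.symm.nontrivial
    refine (containsLine_compl_singleton (σ ⟨N - 1, by omega⟩)).mono fun w hw => ?_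
    have : (σ.symm w : ℕ) ≠ N - 1 := fun h => hw (by simp [← h])
    simp only [Set.mem_ofPred_eq]
    omega
  obtain ⟨k, hk, hk'⟩ := Nat.exists_not_and_succ_of_not_zero_of_exists
    (p := fun k => ContainsLine {w | (σ.symm w : ℕ) < k}) hempty ⟨N - 1, hlast⟩
  have hkN : k < N - 1 := by
    by_contra! h
    exact hk (hlast.mono fun w (hw : (σ.symm w : ℕ) < N - 1) => hw.trans_le h)
  refine ⟨k + 1, σ ⟨k, by omega⟩, by omega, by omega, hk', fun h => hk (h.mono ?_)⟩
  rintro w ⟨hw : (σ.symm w : ℕ) < k + 1, hwk⟩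
  have : (σ.symm w : ℕ) ≠ k := fun h => hwk (by simp [← h])
  simp only [Set.mem_ofPred_eq]
  omega

theorem min_card_sub_one_le_cutRank_boxProd [Fintype V] [Fintype W] [Fintype β]
    {G : SimpleGraph V} {H : SimpleGraph W} (hG : G.Preconnected) (hH : H.Preconnected)
    (f : α ⊕ β ≃ V × W) {v : V × W} (hline : ContainsLine {w | (f.symm w).isLeft})
    (hfirst : ¬ContainsLine ({w | (f.symm w).isLeft} \ {v})) :
    min (Fintype.card V) (Fintype.card W) - 1 ≤ cutRank (G □ H) f := by
  classical
  obtain ⟨hrows, hcols⟩ := exists_notMem_of_not_containsLine_diff_singleton hfirst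
  simp only [Set.mem_ofPred_eq, Sum.not_isLeft] at hrows hcols
  rcases hline with ⟨r, hr⟩ | ⟨c, hc⟩
  · have hrank : (univ.erase v.2).card ≤ cutRank (G □ H) f :=
      card_le_cutRank_boxProd hG H f hr fun c hc => hcols c (ne_of_mem_erase hc)
    rw [card_erase_of_mem (mem_univ _), card_univ] at hrank
    omega
  · have hrank : (univ.erase v.1).card ≤
        cutRank (H □ G) (f.trans (SimpleGraph.boxProdComm G H).toEquiv) :=
      card_le_cutRank_boxProd hH G _ hc fun r hr => hrows r (ne_of_mem_erase hr)
    rw [card_erase_of_mem (mem_univ _), card_univ, cutRank_trans_iso] at hrank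
    omega

end Sweep

section Schmidt

variable {V W : Type*} {j N : ℕ}

/-- The decomposition of `N` positions into the first `j` and the last `N - j`. -/
def cutEquiv (hj : j ≤ N) : Fin j ⊕ Fin (N - j) ≃ Fin N :=
  finSumFinEquiv.trans (finCongr (Nat.add_sub_cancel' hj))

theorem sumElim_cutEquiv_symm {γ : Type*} (hj : j ≤ N) (a : Fin j → γ) (b : Fin (N - j) → γ)
    (i : Fin N) :
    Sum.elim a b ((cutEquiv hj).symm i) =
      if h : (i : ℕ) < j then a ⟨i, h⟩ else b ⟨i - j, by omega⟩ := by
  obtain ⟨i | i, rfl⟩ := (cutEquiv hj).surjective i <;> simp [cutEquiv]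

theorem isLeft_cutEquiv_symm (hj : j ≤ N) (i : Fin N) :
    ((cutEquiv hj).symm i).isLeft ↔ (i : ℕ) < j := by
  obtain ⟨i | i, rfl⟩ := (cutEquiv hj).surjective i <;> simp [cutEquiv]

theorem cluster_state_schmidt_rank_general [Fintype V] [Fintype W] {G : SimpleGraph V}
    {H : SimpleGraph W} (hG : G.Preconnected) (hH : H.Preconnected) (hN : 2 ≤ N)
    (σ : Fin N ≃ V × W) :
    ∃ j : ℕ, 1 ≤ j ∧ j ≤ N - 1 ∧
      2 ^ (min (Fintype.card V) (Fintype.card W) - 1) ≤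
        Matrix.rank (fun (a : Fin j → Bool) (b : Fin (N - j) → Bool) =>
          ampGraphState (G □ H) (fun v =>
            if h : (σ.symm v : ℕ) < j then a ⟨σ.symm v, h⟩
            else b ⟨σ.symm v - j, by omega⟩)) := by
  obtain ⟨j, v, hj, hjN, hline, hfirst⟩ := exists_first_containsLine hN σ
  refine ⟨j, hj, by omega, ?_⟩
  have hleft : {w | (((cutEquiv hjN.le).trans σ).symm w).isLeft} = {w | (σ.symm w : ℕ) < j} :=
    Set.ext fun w => isLeft_cutEquiv_symm hjN.le (σ.symm w)
  simp only [← sumElim_cutEquiv_symm hjN.le]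
  calc 2 ^ (min (Fintype.card V) (Fintype.card W) - 1)
      ≤ 2 ^ cutRank (G □ H) ((cutEquiv hjN.le).trans σ) :=
        Nat.pow_le_pow_right two_pos (min_card_sub_one_le_cutRank_boxProd hG hH _
          (hleft ▸ hline) (hleft ▸ hfirst))
    _ = _ := (rank_ampGraphState_sumElim _ _).symm

end Schmidt

theorem gridGraph_eq_boxProd (n : ℕ) :
    gridGraph n = SimpleGraph.pathGraph n □ SimpleGraph.pathGraph n := by
  ext u v
  simp only [gridGraph, SimpleGraph.fromRel_adj, SimpleGraph.boxProd_adj,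
    SimpleGraph.pathGraph_adj]
  grind

/-- For any qubit order, the `n × n` cluster state has a cut whose Schmidt rank is
at least `2^(n−1)`. -/
theorem cluster_state_schmidt_rank (n : ℕ) (hn : 2 ≤ n)
    (σ : Fin (n ^ 2) ≃ (Fin n × Fin n)) :
    ∃ j : ℕ, 1 ≤ j ∧ j ≤ n ^ 2 - 1 ∧
      2 ^ (n - 1) ≤
        Matrix.rank (fun (a : Fin j → Bool) (b : Fin (n ^ 2 - j) → Bool) =>
          ampGraphState (gridGraph n) (fun v =>
            if h : ((σ.symm v : Fin (n ^ 2)) : ℕ) < j then a ⟨(σ.symm v : ℕ), h⟩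
            else b ⟨((σ.symm v : Fin (n ^ 2)) : ℕ) - j, by
              have := (σ.symm v).isLt; omega⟩)) := by
  simpa [gridGraph_eq_boxProd] using cluster_state_schmidt_rank_general
    (SimpleGraph.pathGraph_preconnected n) (SimpleGraph.pathGraph_preconnected n)
    (hn.trans (Nat.le_self_pow two_ne_zero n)) σ

end
end

section
/- Let S ⊆ {0,1}^(n+1) be a subgroup under bitwise XOR that contains an element of the form (1, u) with u ∈ {0,1}^n, and let S₀ = {x ∈ {0,1}^n : (0, x) ∈ S}. Then S₀ is nonempty and |S⟩ = (1/√2)·(|0⟩⊗|S₀⟩ + |1⟩⊗(X^{u_n} ⊗ ⋯ ⊗ X^{u_1})|S₀⟩), where X^0 = I and X^1 = X, and the j-th factor acts on the qubit corresponding to the j-th bit of u. -/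
open Matrix

noncomputable section

/-!
Write `v = (1, u)`. Translation by `v` is an involution of `S` that flips the leading bit, so it
maps the strings of `S` starting with `0` onto those starting with `1`: writing `S₁` for the set
of `x` with `(1, x) ∈ S`, we get `S₁ = S₀ + u`. Both halves of the vector `|S⟩` are thus uniform
superpositions over sets of size `|S| / 2`, whence the factor `1 / √2`, and the string of `X`s
given by `u` permutes the basis states by `x ↦ x + u`, so it takes `|S₀⟩` to `|S₁⟩`.
-/

/-- The bijection between two copies of the `m`-qubit basis states and the `m + 1`-qubit basis
states, the left copy being the strings with leading bit `0` and the right copy those with leading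
bit `1`. It presents `kron` as a block matrix and `dirac` as a block vector. -/
def leadingBitEquiv (m : ℕ) : Fin (2 ^ m) ⊕ Fin (2 ^ m) ≃ Fin (2 ^ (m + 1)) :=
  finSumFinEquiv.trans (finCongr (by rw [pow_succ, mul_two]))

@[simp]
theorem val_leadingBitEquiv_inl {m : ℕ} (i : Fin (2 ^ m)) :
    (leadingBitEquiv m (Sum.inl i) : ℕ) = i := rfl

@[simp]
theorem val_leadingBitEquiv_inr {m : ℕ} (i : Fin (2 ^ m)) :
    (leadingBitEquiv m (Sum.inr i) : ℕ) = 2 ^ m + i := rfl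

section Kronecker

variable {m : ℕ}

theorem dirac_comp_leadingBitEquiv (φ₀ φ₁ : Fin (2 ^ m) → ℂ) :
    dirac φ₀ φ₁ ∘ leadingBitEquiv m = Sum.elim φ₀ φ₁ := by
  ext (i | i) <;> simp [dirac]

theorem eq_dirac_iff {φ₀ φ₁ : Fin (2 ^ m) → ℂ} {ψ : Fin (2 ^ (m + 1)) → ℂ} :
    ψ = dirac φ₀ φ₁ ↔ ψ ∘ leadingBitEquiv m = Sum.elim φ₀ φ₁ := by
  rw [← dirac_comp_leadingBitEquiv, (leadingBitEquiv m).surjective.injective_comp_right.eq_iff]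

theorem restrict_eq_dirac (f : ℕ → ℂ) :
    (fun i : Fin (2 ^ (m + 1)) => f i) =
      dirac (fun i : Fin (2 ^ m) => f i) (fun i : Fin (2 ^ m) => f (2 ^ m + i)) := by
  rw [eq_dirac_iff]
  ext (i | i) <;> simp

theorem smul_dirac (c : ℂ) (φ₀ φ₁ : Fin (2 ^ m) → ℂ) :
    c • dirac φ₀ φ₁ = dirac (c • φ₀) (c • φ₁) := by
  rw [eq_dirac_iff, Pi.smul_comp, dirac_comp_leadingBitEquiv]
  ext (i | i) <;> rfl

theorem kron_submatrix_leadingBitEquiv (A : Matrix (Fin 2) (Fin 2) ℂ)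
    (B : Matrix (Fin (2 ^ m)) (Fin (2 ^ m)) ℂ) :
    (kron A B).submatrix (leadingBitEquiv m) (leadingBitEquiv m) =
      fromBlocks (A 0 0 • B) (A 0 1 • B) (A 1 0 • B) (A 1 1 • B) := by
  ext (i | i) (j | j) <;> simp [kron, Nat.mod_eq_of_lt]

theorem kron_mulVec_dirac (A : Matrix (Fin 2) (Fin 2) ℂ) (B : Matrix (Fin (2 ^ m)) (Fin (2 ^ m)) ℂ)
    (φ₀ φ₁ : Fin (2 ^ m) → ℂ) :
    kron A B *ᵥ dirac φ₀ φ₁ =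
      dirac (A 0 0 • B *ᵥ φ₀ + A 0 1 • B *ᵥ φ₁) (A 1 0 • B *ᵥ φ₀ + A 1 1 • B *ᵥ φ₁) := by
  let e := leadingBitEquiv m
  rw [eq_dirac_iff]
  calc (kron A B *ᵥ dirac φ₀ φ₁) ∘ e
      = (kron A B).submatrix e e *ᵥ (dirac φ₀ φ₁ ∘ e) := by
        rw [submatrix_mulVec_equiv, Function.comp_assoc, Equiv.self_comp_symm, Function.comp_id]
    _ = fromBlocks (A 0 0 • B) (A 0 1 • B) (A 1 0 • B) (A 1 1 • B) *ᵥ Sum.elim φ₀ φ₁ := by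
        rw [kron_submatrix_leadingBitEquiv, dirac_comp_leadingBitEquiv]
    _ = Sum.elim (A 0 0 • B *ᵥ φ₀ + A 0 1 • B *ᵥ φ₁) (A 1 0 • B *ᵥ φ₀ + A 1 1 • B *ᵥ φ₁) := by
        simp only [fromBlocks_mulVec, Sum.elim_comp_inl, Sum.elim_comp_inr, smul_mulVec]

theorem kron_one_mulVec_dirac (B : Matrix (Fin (2 ^ m)) (Fin (2 ^ m)) ℂ)
    (φ₀ φ₁ : Fin (2 ^ m) → ℂ) :
    kron 1 B *ᵥ dirac φ₀ φ₁ = dirac (B *ᵥ φ₀) (B *ᵥ φ₁) := by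
  simp [kron_mulVec_dirac]

theorem kron_pauliX_mulVec_dirac (B : Matrix (Fin (2 ^ m)) (Fin (2 ^ m)) ℂ)
    (φ₀ φ₁ : Fin (2 ^ m) → ℂ) :
    kron pauliX B *ᵥ dirac φ₀ φ₁ = dirac (B *ᵥ φ₁) (B *ᵥ φ₀) := by
  simp [kron_mulVec_dirac, pauliX]

end Kronecker

section Xor

variable {m x y : ℕ}

theorem two_pow_add_eq_two_pow_xor (hx : x < 2 ^ m) : 2 ^ m + x = 2 ^ m ^^^ x := by
  refine Nat.eq_of_testBit_eq fun k => ?_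
  have hor : 2 ^ m + x = 2 ^ m ||| x := by simpa using Nat.two_pow_add_eq_or_of_lt hx 1
  rw [hor, Nat.testBit_or, Nat.testBit_xor, Nat.testBit_two_pow]
  obtain rfl | hk := eq_or_ne m k
  · simp [Nat.testBit_lt_two_pow hx]
  · simp [hk]

theorem two_pow_add_xor (hx : x < 2 ^ m) (hy : y < 2 ^ m) :
    (2 ^ m + x) ^^^ y = 2 ^ m + (x ^^^ y) := by
  rw [two_pow_add_eq_two_pow_xor hx, two_pow_add_eq_two_pow_xor (Nat.xor_lt_two_pow hx hy),
    Nat.xor_assoc]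

theorem xor_two_pow_add (hx : x < 2 ^ m) (hy : y < 2 ^ m) :
    x ^^^ (2 ^ m + y) = 2 ^ m + (x ^^^ y) := by
  rw [Nat.xor_comm, two_pow_add_xor hy hx, Nat.xor_comm]

theorem two_pow_add_xor_two_pow_add (hx : x < 2 ^ m) (hy : y < 2 ^ m) :
    (2 ^ m + x) ^^^ (2 ^ m + y) = x ^^^ y := by
  rw [two_pow_add_eq_two_pow_xor hx, two_pow_add_eq_two_pow_xor hy, Nat.xor_comm (2 ^ m) x,
    Nat.xor_assoc, Nat.xor_xor_cancel_left]

theorem ofBits_eq_ofBits_castSucc_add (a : Fin (m + 1) → Bool) :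
    Nat.ofBits a =
      Nat.ofBits (fun j : Fin m => a j.castSucc) + 2 ^ m * (a (Fin.last m)).toNat := by
  have hinit : Nat.ofBits (fun j : Fin m => a j.castSucc) = Nat.ofBits a % 2 ^ m := by
    rw [← Nat.ofBits_testBit]
    congr 1 with j
    exact (Nat.testBit_ofBits_lt a j (j.isLt.trans m.lt_succ_self)).symm
  have hlast : a (Fin.last m) = (Nat.ofBits a).testBit m :=
    (Nat.testBit_ofBits_lt a m m.lt_succ_self).symm
  rw [hinit, hlast, Nat.toNat_testBit, ← Nat.mod_pow_succ,
    Nat.mod_eq_of_lt (Nat.ofBits_lt_two_pow a)]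

end Xor

theorem xString_mulVec_restrict {m : ℕ} (a : Fin m → Bool) (f : ℕ → ℂ) :
    xString m a *ᵥ (fun i : Fin (2 ^ m) => f i) =
      fun i : Fin (2 ^ m) => f (i ^^^ Nat.ofBits a) := by
  induction m generalizing f with
  | zero => simp [xString, Matrix.one_mulVec]
  | succ m ih =>
    have hlow := ih (fun j => a j.castSucc) f
    have hhigh := ih (fun j => a j.castSucc) fun x => f (2 ^ m + x)
    have hlt := Nat.ofBits_lt_two_pow fun j : Fin m => a j.castSucc
    rw [restrict_eq_dirac f, restrict_eq_dirac fun x => f (x ^^^ Nat.ofBits a),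
      ofBits_eq_ofBits_castSucc_add, xString]
    cases a (Fin.last m) with
    | false =>
      simp [kron_one_mulVec_dirac, hlow, hhigh, two_pow_add_xor, hlt]
    | true =>
      simp [kron_pauliX_mulVec_dirac, hlow, hhigh, add_comm _ (2 ^ m), xor_two_pow_add,
        two_pow_add_xor_two_pow_add, hlt]

theorem ncard_preimage_xor (u : ℕ) (C : Set ℕ) : ((· ^^^ u) ⁻¹' C).ncard = C.ncard := by
  have hinv : Function.Involutive (· ^^^ u) := fun x => Nat.xor_xor_cancel_right x u
  exact Set.ncard_preimage_of_injective_subset_range hinv.injective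
    (hinv.surjective.range_eq ▸ Set.subset_univ C)

theorem cosetState_eq_restrict_indicator (n : ℕ) (C : Set ℕ) :
    cosetState n C =
      fun i : Fin (2 ^ n) => C.indicator (fun _ => 1 / (Real.sqrt C.ncard : ℂ)) i := rfl

theorem xString_mulVec_cosetState {m : ℕ} (a : Fin m → Bool) (C : Set ℕ) :
    xString m a *ᵥ cosetState m C = cosetState m ((· ^^^ Nat.ofBits a) ⁻¹' C) := by
  rw [cosetState_eq_restrict_indicator, xString_mulVec_restrict, cosetState_eq_restrict_indicator,
    ncard_preimage_xor]
  rfl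

/-- The bit strings `x` of length `n` with `(0, x) ∈ S`, written `S₀` in the paper. -/
def zeroBranch (n : ℕ) (S : Set ℕ) : Set ℕ := {x | x < 2 ^ n ∧ x ∈ S}

/-- The bit strings `x` of length `n` with `(1, x) ∈ S`: the counterpart of `zeroBranch` for the
other value of the leading bit, which has weight `2 ^ n` in the encoding by natural numbers. -/
def oneBranch (n : ℕ) (S : Set ℕ) : Set ℕ := {x | x < 2 ^ n ∧ 2 ^ n + x ∈ S}

section Branches

variable {n : ℕ} {S : Set ℕ}

theorem mem_zeroBranch {x : ℕ} : x ∈ zeroBranch n S ↔ x < 2 ^ n ∧ x ∈ S := Iff.rfl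

theorem mem_oneBranch {x : ℕ} : x ∈ oneBranch n S ↔ x < 2 ^ n ∧ 2 ^ n + x ∈ S := Iff.rfl

theorem eq_zeroBranch_union_image_oneBranch (hS : ∀ x ∈ S, x < 2 ^ (n + 1)) :
    S = zeroBranch n S ∪ (2 ^ n + ·) '' oneBranch n S := by
  ext x
  constructor
  · intro hx
    obtain hlt | hle := lt_or_ge x (2 ^ n)
    · exact Or.inl ⟨hlt, hx⟩
    · obtain ⟨y, rfl⟩ := Nat.exists_eq_add_of_le hle
      have hy : y < 2 ^ n := by
        have hlt := hS _ hx
        rw [pow_succ] at hlt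
        lia
      exact Or.inr ⟨y, ⟨hy, hx⟩, rfl⟩
  · rintro (hx | ⟨y, hy, rfl⟩)
    exacts [hx.2, hy.2]

theorem ncard_eq_ncard_zeroBranch_add_ncard_oneBranch (hS : ∀ x ∈ S, x < 2 ^ (n + 1)) :
    S.ncard = (zeroBranch n S).ncard + (oneBranch n S).ncard := by
  have hdisj : Disjoint (zeroBranch n S) ((2 ^ n + ·) '' oneBranch n S) := by
    rw [Set.disjoint_left]
    rintro _ hx ⟨y, -, rfl⟩
    exact (Nat.le_add_right _ y).not_gt hx.1
  have hzero : (zeroBranch n S).Finite := (Set.finite_lt_nat _).subset fun _ hx => hx.1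
  have hone : (oneBranch n S).Finite := (Set.finite_lt_nat _).subset fun _ hx => hx.1
  conv_lhs => rw [eq_zeroBranch_union_image_oneBranch hS]
  rw [Set.ncard_union_eq hdisj hzero (hone.image _),
    Set.ncard_image_of_injective _ (add_right_injective _)]

theorem cosetState_succ_eq_smul_dirac (hS : ∀ x ∈ S, x < 2 ^ (n + 1))
    (hcard : (oneBranch n S).ncard = (zeroBranch n S).ncard) :
    cosetState (n + 1) S =
      (Real.sqrt 2 : ℂ)⁻¹ •
        dirac (cosetState n (zeroBranch n S)) (cosetState n (oneBranch n S)) := by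
  classical
  have hnorm : (1 / Real.sqrt S.ncard : ℂ) =
      (Real.sqrt 2 : ℂ)⁻¹ * (1 / Real.sqrt (zeroBranch n S).ncard) := by
    rw [ncard_eq_ncard_zeroBranch_add_ncard_oneBranch hS, hcard, ← two_mul, Nat.cast_mul,
      Nat.cast_ofNat, Real.sqrt_mul zero_le_two, Complex.ofReal_mul]
    ring
  rw [smul_dirac, cosetState_eq_restrict_indicator, restrict_eq_dirac]
  congr 1 <;> ext i
  · simp [cosetState, Set.indicator_apply, hnorm, mem_zeroBranch]
  · simp [cosetState, Set.indicator_apply, hnorm, hcard, mem_oneBranch]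

variable {U : ℕ}

theorem oneBranch_eq_preimage_xor_zeroBranch (hU : U < 2 ^ n)
    (hinv : ∀ x ∈ S, x ^^^ (2 ^ n + U) ∈ S) :
    oneBranch n S = (· ^^^ U) ⁻¹' zeroBranch n S := by
  ext x
  constructor
  · rintro ⟨hx, hxS⟩
    have hmem := hinv _ hxS
    rw [two_pow_add_xor_two_pow_add hx hU] at hmem
    exact ⟨Nat.xor_lt_two_pow hx hU, hmem⟩
  · rintro ⟨hxU, hxS⟩
    have hx : x < 2 ^ n := by simpa using Nat.xor_lt_two_pow hxU hU
    have hmem := hinv _ hxS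
    rw [xor_two_pow_add hxU hU, Nat.xor_xor_cancel_right] at hmem
    exact ⟨hx, hmem⟩

theorem zeroBranch_nonempty (hne : S.Nonempty) (hS : ∀ x ∈ S, x < 2 ^ (n + 1)) (hU : U < 2 ^ n)
    (hinv : ∀ x ∈ S, x ^^^ (2 ^ n + U) ∈ S) : (zeroBranch n S).Nonempty := by
  rw [eq_zeroBranch_union_image_oneBranch hS] at hne
  obtain ⟨x, hx | ⟨y, hy, -⟩⟩ := hne
  · exact ⟨x, hx⟩
  · rw [oneBranch_eq_preimage_xor_zeroBranch hU hinv] at hy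
    exact ⟨_, hy⟩

theorem coset_state_recursive_decomposition_general (hS : ∀ x ∈ S, x < 2 ^ (n + 1))
    (hne : S.Nonempty) (hU : U < 2 ^ n) (hinv : ∀ x ∈ S, x ^^^ (2 ^ n + U) ∈ S) :
    (zeroBranch n S).Nonempty ∧
      cosetState (n + 1) S =
        (Real.sqrt 2 : ℂ)⁻¹ •
          dirac (cosetState n (zeroBranch n S))
            (xString n (fun j => U.testBit j) *ᵥ cosetState n (zeroBranch n S)) := by
  have hone := oneBranch_eq_preimage_xor_zeroBranch hU hinv
  refine ⟨zeroBranch_nonempty hne hS hU hinv, ?_⟩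
  rw [xString_mulVec_cosetState, Nat.ofBits_testBit, Nat.mod_eq_of_lt hU, ← hone]
  refine cosetState_succ_eq_smul_dirac hS ?_
  rw [hone, ncard_preimage_xor]

end Branches

/-- Recursive decomposition of a coset state of a subgroup `S ⊆ {0,1}^(n+1)` (under
bitwise XOR, with bitstrings encoded as natural numbers `< 2^(n+1)`, the first/new
bit being the most significant one) containing an element `(1, u)`, where `u` is
encoded by `U < 2^n`. -/
theorem coset_state_recursive_decomposition (n : ℕ) (S : Set ℕ)
    (hbound : ∀ x ∈ S, x < 2 ^ (n + 1)) (hzero : 0 ∈ S)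
    (hclosed : ∀ a ∈ S, ∀ b ∈ S, a ^^^ b ∈ S)
    (U : ℕ) (hU : U < 2 ^ n) (hUS : 2 ^ n + U ∈ S) :
    {x : ℕ | x < 2 ^ n ∧ x ∈ S}.Nonempty ∧
      cosetState (n + 1) S =
        (Real.sqrt 2 : ℂ)⁻¹ •
          dirac (cosetState n {x : ℕ | x < 2 ^ n ∧ x ∈ S})
            ((xString n (fun j => U.testBit (j : ℕ))).mulVec
              (cosetState n {x : ℕ | x < 2 ^ n ∧ x ∈ S})) := by
  exact coset_state_recursive_decomposition_general hbound ⟨0, hzero⟩ hU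
    fun x hx => hclosed x hx _ hUS

end
end

section
/- Define sets Z_k ⊆ ℂ^(2^k) recursively by Z_1 = {(|0⟩ + |1⟩)/√2} and Z_{k+1} = {(1/√2)·(|0⟩⊗v + |1⟩⊗(Z^{a_k} ⊗ ⋯ ⊗ Z^{a_1})v) : v ∈ Z_k, (a_1,…,a_k) ∈ {0,1}^k}, where Z^0 = I and Z^1 = Z. Then for every n ≥ 1, Z_n equals the set of n-vertex graph states {|G⟩ : G a simple graph on vertex set {1,…,n}}. -/
open Matrix

noncomputable section

/-- The states represented by Tower `⟨Z⟩`-LIMDDs: `Z_1 = {(|0⟩+|1⟩)/√2}` and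
`Z_{k+1}` is built from `Z_k` by the tower construction with `Z`-string labels. -/
def Zset : (k : ℕ) → Set (Fin (2 ^ k) → ℂ)
  | 0 => ∅
  | 1 => {fun _ => (Real.sqrt 2 : ℂ)⁻¹}
  | k + 2 => {w | ∃ v ∈ Zset (k + 1), ∃ a : Fin (k + 1) → Bool,
      w = (Real.sqrt 2 : ℂ)⁻¹ • dirac v ((zString (k + 1) a).mulVec v)}

/-!
In the computational basis, `Z^a = Z^{a_m} ⊗ ⋯ ⊗ Z^{a_1}` is diagonal and multiplies `|y⟩` by
`(-1)^{a·y}`.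
Let `G` arise from a graph `G'` on `m` vertices by adding a vertex with neighbourhood `a`. An edge
of `G` inside the support of the basis state `|b⟩ ⊗ |y⟩` is an edge of `G'` inside the support of
`y`, or, if `b = 1`, one of the `a·y` edges at the new vertex. Hence
`|G⟩ = (|0⟩ ⊗ |G'⟩ + |1⟩ ⊗ Z^a |G'⟩) / √2`: a tower step with label `a` adds a vertex with
neighbourhood `a`, and every graph is built up in this way from its one-vertex subgraph.
-/

open scoped Kronecker

/-- The splitting of a basis index of `m + 1` qubits into its most significant bit and the basis
index of the other `m` qubits. It identifies `kron` with Mathlib's Kronecker product. -/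
def topBitEquiv (m : ℕ) : Fin (2 ^ (m + 1)) ≃ Fin 2 × Fin (2 ^ m) :=
  (finCongr (pow_succ' 2 m)).trans finProdFinEquiv.symm

section TopBit

variable {m : ℕ} (b : Fin 2) (y : Fin (2 ^ m))

lemma coe_topBitEquiv_symm : ((topBitEquiv m).symm (b, y) : ℕ) = 2 ^ m * b + y := by
  simp [topBitEquiv, finProdFinEquiv, add_comm]

lemma testBit_topBitEquiv_symm (j : Fin m) :
    ((topBitEquiv m).symm (b, y) : ℕ).testBit j = (y : ℕ).testBit j := by
  simp [coe_topBitEquiv_symm, Nat.testBit_two_pow_mul_add _ y.isLt]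

lemma testBit_self_topBitEquiv_symm :
    ((topBitEquiv m).symm (b, y) : ℕ).testBit m = decide (b = 1) := by
  rw [coe_topBitEquiv_symm, Nat.testBit_two_pow_mul_add _ y.isLt]
  fin_cases b <;> simp

lemma topBitEquiv_symm_lt_iff : ((topBitEquiv m).symm (b, y) : ℕ) < 2 ^ m ↔ b = 0 := by
  rw [coe_topBitEquiv_symm]
  fin_cases b <;> simp

lemma dirac_topBitEquiv_symm (φ₀ φ₁ : Fin (2 ^ m) → ℂ) :
    dirac φ₀ φ₁ ((topBitEquiv m).symm (b, y)) = ![φ₀, φ₁] b y := by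
  simp only [dirac, coe_topBitEquiv_symm]
  fin_cases b <;> simp

lemma kron_eq_submatrix_kronecker (A : Matrix (Fin 2) (Fin 2) ℂ)
    (B : Matrix (Fin (2 ^ m)) (Fin (2 ^ m)) ℂ) :
    kron A B = (A ⊗ₖ B).submatrix (topBitEquiv m) (topBitEquiv m) := by
  have top_bit (i : Fin (2 ^ (m + 1))) :
      (if (i : ℕ) < 2 ^ m then 0 else 1) = (topBitEquiv m i).1 := by
    obtain ⟨⟨b, y⟩, rfl⟩ := (topBitEquiv m).symm.surjective i
    simp only [Equiv.apply_symm_apply, topBitEquiv_symm_lt_iff]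
    fin_cases b <;> rfl
  ext i j
  rw [kron, top_bit, top_bit]
  rfl

end TopBit

/-- The number of common ones of the bit string `a` and the binary expansion of `x`: the integer
`a·x` in `Z^a |x⟩ = (-1)^{a·x} |x⟩`. -/
def commonOnes {m : ℕ} (a : Fin m → Bool) (x : ℕ) : ℕ :=
  (Finset.univ.filter fun j : Fin m => a j = true ∧ x.testBit j = true).card

lemma commonOnes_topBitEquiv_symm {m : ℕ} (a : Fin (m + 1) → Bool) (b : Fin 2)
    (y : Fin (2 ^ m)) :
    commonOnes a ((topBitEquiv m).symm (b, y)) =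
      (if a (Fin.last m) = true ∧ b = 1 then 1 else 0) +
        commonOnes (fun j => a j.castSucc) y := by
  simp only [commonOnes, Finset.card_filter, Fin.sum_univ_castSucc, Fin.val_castSucc,
    Fin.val_last, testBit_topBitEquiv_symm, testBit_self_topBitEquiv_symm, decide_eq_true_eq,
    add_comm]

lemma pauliZ_eq_diagonal : pauliZ = diagonal ![1, -1] := by
  ext i j
  fin_cases i <;> fin_cases j <;> simp [pauliZ]

lemma zString_eq_diagonal {m : ℕ} (a : Fin m → Bool) :
    zString m a = diagonal fun x : Fin (2 ^ m) => (-1 : ℂ) ^ commonOnes a x := by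
  induction m with
  | zero => simp [zString, commonOnes]
  | succ m ih =>
    have top_factor : (if a (Fin.last m) then pauliZ else 1) =
        diagonal fun b : Fin 2 => (-1 : ℂ) ^ if a (Fin.last m) = true ∧ b = 1 then 1 else 0 := by
      cases a (Fin.last m)
      · simp
      · rw [if_pos rfl, pauliZ_eq_diagonal]
        congr 1
        ext b
        fin_cases b <;> simp
    rw [zString, ih, top_factor, kron_eq_submatrix_kronecker, diagonal_kronecker_diagonal,
      submatrix_diagonal_equiv]
    congr 1
    ext i
    obtain ⟨⟨b, y⟩, rfl⟩ := (topBitEquiv m).symm.surjective i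
    rw [Function.comp_apply, Equiv.apply_symm_apply, commonOnes_topBitEquiv_symm, pow_add]

/-- The graph obtained from `G` by adding a last vertex whose neighbours are the vertices marked
by `a`. -/
def addLastVertex {m : ℕ} (G : SimpleGraph (Fin m)) (a : Fin m → Bool) :
    SimpleGraph (Fin (m + 1)) where
  Adj u v := Fin.lastCases (Fin.lastCases False (fun j => a j = true) v)
    (fun i => Fin.lastCases (a i = true) (fun j => G.Adj i j) v) u
  symm := ⟨fun u v => by
    cases u using Fin.lastCases <;> cases v using Fin.lastCases <;> simp [G.adj_comm]⟩
  loopless := ⟨fun u => by cases u using Fin.lastCases <;> simp⟩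

section AddLastVertex

variable {m : ℕ} (G : SimpleGraph (Fin m)) (a : Fin m → Bool)

@[simp]
lemma addLastVertex_adj_castSucc_castSucc (i j : Fin m) :
    (addLastVertex G a).Adj i.castSucc j.castSucc ↔ G.Adj i j := by
  simp [addLastVertex]

@[simp]
lemma addLastVertex_adj_castSucc_last (i : Fin m) :
    (addLastVertex G a).Adj i.castSucc (Fin.last m) ↔ a i = true := by
  simp [addLastVertex]

lemma exists_eq_addLastVertex (H : SimpleGraph (Fin (m + 1))) :
    ∃ G a, H = addLastVertex G a := by
  classical
  refine ⟨H.comap Fin.castSucc, fun j => decide (H.Adj j.castSucc (Fin.last m)), ?_⟩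
  ext u v
  cases u using Fin.lastCases <;> cases v using Fin.lastCases <;>
    simp [SimpleGraph.adj_comm _ (Fin.last m)]

lemma edgeCount_addLastVertex (b : Fin 2) (y : Fin (2 ^ m)) :
    edgeCount (addLastVertex G a) ((topBitEquiv m).symm (b, y)) =
      edgeCount G y + if b = 1 then commonOnes a y else 0 := by
  classical
  have not_last_lt (i : Fin (m + 1)) : ¬ Fin.last m < i := (Fin.le_last i).not_gt
  simp only [edgeCount, Finset.card_filter, Fintype.sum_prod_type, Fin.sum_univ_castSucc,
    Finset.sum_add_distrib, addLastVertex_adj_castSucc_castSucc, addLastVertex_adj_castSucc_last,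
    Fin.castSucc_lt_castSucc_iff, Fin.castSucc_lt_last, Fin.val_castSucc, Fin.val_last,
    testBit_topBitEquiv_symm, testBit_self_topBitEquiv_symm]
  by_cases hb : b = 1 <;> simp [hb, not_last_lt, commonOnes]

lemma graphState_addLastVertex :
    graphState (addLastVertex G a) =
      (Real.sqrt 2 : ℂ)⁻¹ • dirac (graphState G) (zString m a *ᵥ graphState G) := by
  ext i
  obtain ⟨⟨b, y⟩, rfl⟩ := (topBitEquiv m).symm.surjective i
  have sqrt_split : (Real.sqrt (2 ^ (m + 1)) : ℂ) = Real.sqrt (2 ^ m) * Real.sqrt 2 := by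
    rw [pow_succ, Real.sqrt_mul (by positivity), Complex.ofReal_mul]
  rw [Pi.smul_apply, dirac_topBitEquiv_symm, graphState, edgeCount_addLastVertex, sqrt_split,
    zString_eq_diagonal]
  fin_cases b
  · simp [graphState, div_eq_mul_inv, mul_left_comm]
  · simp [graphState, mulVec_diagonal, pow_add, div_eq_mul_inv, mul_assoc, mul_left_comm]

end AddLastVertex

lemma graphState_bot (n : ℕ) :
    graphState (⊥ : SimpleGraph (Fin n)) = fun _ => (Real.sqrt (2 ^ n) : ℂ)⁻¹ := by
  ext x
  simp [graphState, edgeCount]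

lemma Zset_one : Zset 1 = {graphState ⊥} := by
  simp [Zset, graphState_bot]

lemma mem_Zset_succ {n : ℕ} (hn : 1 ≤ n) {w : Fin (2 ^ (n + 1)) → ℂ} :
    w ∈ Zset (n + 1) ↔ ∃ v ∈ Zset n, ∃ a : Fin n → Bool,
      w = (Real.sqrt 2 : ℂ)⁻¹ • dirac v (zString n a *ᵥ v) := by
  obtain ⟨k, rfl⟩ := Nat.exists_eq_add_of_le' hn
  rfl

/-- The tower construction with `Z`-string labels produces exactly the graph states. -/
theorem Zset_eq_graph_states (n : ℕ) (hn : 1 ≤ n) :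
    Zset n = {ψ : Fin (2 ^ n) → ℂ | ∃ G : SimpleGraph (Fin n), ψ = graphState G} := by
  induction n, hn using Nat.le_induction with
  | base =>
    ext w
    rw [Zset_one]
    exact ⟨fun hw => ⟨⊥, hw⟩, fun ⟨G, hw⟩ => Subsingleton.elim G ⊥ ▸ hw⟩
  | succ n hn ih =>
    ext w
    rw [mem_Zset_succ hn, ih]
    constructor
    · rintro ⟨_, ⟨G, rfl⟩, a, rfl⟩
      exact ⟨addLastVertex G a, (graphState_addLastVertex G a).symm⟩
    · rintro ⟨H, rfl⟩
      obtain ⟨G, a, rfl⟩ := exists_eq_addLastVertex H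
      exact ⟨graphState G, ⟨G, rfl⟩, a, graphState_addLastVertex G a⟩

end
end
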